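/- arXiv:2508.00770 — 2 statements merged into one kernel-verified Lean document; each statement's English description precedes it below -/
import Mathlib

section
/- Let Γ be any set of adversaries containing all constant maps, and let φ, δ be two type-I risk safe test families with associated functions E_φ(x) = sup_b ℓ(b)φ(x,b) and E_δ(x) = sup_b ℓ(b)δ(x,b). If E_φ(x) ≥ E_δ(x) for P-almost every x and P({x : E_φ(x) > E_δ(x)}) > 0, then δ is not Γ-admissible. Consequently, if ∫ E_δ dP < 1 then δ is not Γ-admissible. The same statements hold for binary test families when P and Q are continuous (the distribution of Λ under P is atomless) and admissibility is restricted to binary test families. -/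
/-!
If `E_δ ≤ G` almost surely and `∫ G dP ≤ 1`, then `δ` leaves unspent whatever budget lies between
`E_δ` and `G`. Raising `δ` at a single scenario `b` as far as `G` allows keeps it safe and never
increases a type-II risk, and it strictly decreases the one against the constant adversary `b` as
soon as the raise happens with positive probability. For dominated families `G = E_φ`; for
`∫ E_δ dP < 1` the slack is added to `E_δ`, uniformly in the randomized case and, in the binary
case, on an event so unlikely that rejecting at `b` there is affordable. The one delicate point is
that a single `b` must serve on an event of positive probability although the set of losses may be
uncountable; a countable subset of the losses meeting every interval `(c, a]` with `a` a loss
suffices.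
-/

open MeasureTheory
open scoped ENNReal

namespace PostHocTesting

variable {𝒳 : Type*} [MeasurableSpace 𝒳]

/-- The e-value associated to a test family `δ`:
`E_δ(x) = sup_{b ∈ ℬ} ℓ(b) · δ(x,b)`, valued in `ℝ≥0∞`. -/
noncomputable def Esup (ℬ : Set ℝ) (ℓ : ℝ → ℝ) (δ : 𝒳 → ℝ → ℝ) (x : 𝒳) : ℝ≥0∞ :=
  ⨆ b : ℬ, ENNReal.ofReal (ℓ (b : ℝ) * δ x (b : ℝ))

/-- A (randomized) test family: jointly measurable, `[0,1]`-valued on scenarios,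
with measurable associated e-value. -/
def IsTestFamily (ℬ : Set ℝ) (ℓ : ℝ → ℝ) (δ : 𝒳 → ℝ → ℝ) : Prop :=
  Measurable (fun p : 𝒳 × ℝ => δ p.1 p.2) ∧
  (∀ x : 𝒳, ∀ b ∈ ℬ, δ x b ∈ Set.Icc (0 : ℝ) 1) ∧
  Measurable (Esup ℬ ℓ δ)

/-- A binary test family takes only the values 0 and 1. -/
def IsBinaryTestFamily (ℬ : Set ℝ) (ℓ : ℝ → ℝ) (δ : 𝒳 → ℝ → ℝ) : Prop :=
  IsTestFamily ℬ ℓ δ ∧ ∀ x : 𝒳, ∀ b ∈ ℬ, δ x b = 0 ∨ δ x b = 1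

/-- Type-I risk `R_P(δ) = ∫ sup_{b∈ℬ} ℓ(b) δ(x,b) dP(x)`. -/
noncomputable def typeIRisk (P : Measure 𝒳) (ℬ : Set ℝ) (ℓ : ℝ → ℝ)
    (δ : 𝒳 → ℝ → ℝ) : ℝ≥0∞ :=
  ∫⁻ x, Esup ℬ ℓ δ x ∂P

/-- `δ` is type-I risk safe if `R_P(δ) ≤ 1`. -/
def RiskSafe (P : Measure 𝒳) (ℬ : Set ℝ) (ℓ : ℝ → ℝ) (δ : 𝒳 → ℝ → ℝ) : Prop :=
  typeIRisk P ℬ ℓ δ ≤ 1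

/-- Type-II risk of `δ` against the adversary `B`:
`∫ m(B(x)) (1 - δ(x, B(x))) dQ(x)`. -/
noncomputable def typeIIRisk (Q : Measure 𝒳) (m : ℝ → ℝ) (δ : 𝒳 → ℝ → ℝ)
    (B : 𝒳 → ℝ) : ℝ≥0∞ :=
  ∫⁻ x, ENNReal.ofReal (m (B x) * (1 - δ x (B x))) ∂Q

/-- The set `𝐂` of constant adversaries. -/
def ConstAdv (𝒳 : Type*) (ℬ : Set ℝ) : Set (𝒳 → ℝ) :=
  {B | ∃ b ∈ ℬ, B = fun _ => b}

/-- The set `𝐔` of all measurable adversaries. -/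
def AllAdv (𝒳 : Type*) [MeasurableSpace 𝒳] (ℬ : Set ℝ) : Set (𝒳 → ℝ) :=
  {B | Measurable B ∧ ∀ x, B x ∈ ℬ}

/-- `φ` is strictly preferable to `δ` relative to the adversary class `Γ`. -/
def StrictlyPreferable (P Q : Measure 𝒳) (ℬ : Set ℝ) (ℓ m : ℝ → ℝ)
    (Γ : Set (𝒳 → ℝ)) (φ δ : 𝒳 → ℝ → ℝ) : Prop :=
  RiskSafe P ℬ ℓ φ ∧
  (∀ B ∈ Γ, typeIIRisk Q m φ B ≤ typeIIRisk Q m δ B) ∧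
  (∃ B ∈ Γ, typeIIRisk Q m φ B < typeIIRisk Q m δ B)

/-- `Γ`-admissibility among randomized test families. -/
def Admissible (P Q : Measure 𝒳) (ℬ : Set ℝ) (ℓ m : ℝ → ℝ)
    (Γ : Set (𝒳 → ℝ)) (δ : 𝒳 → ℝ → ℝ) : Prop :=
  RiskSafe P ℬ ℓ δ ∧
  ∀ φ : 𝒳 → ℝ → ℝ, IsTestFamily ℬ ℓ φ → ¬ StrictlyPreferable P Q ℬ ℓ m Γ φ δ

/-- `Γ`-admissibility among binary test families. -/
def AdmissibleBinary (P Q : Measure 𝒳) (ℬ : Set ℝ) (ℓ m : ℝ → ℝ)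
    (Γ : Set (𝒳 → ℝ)) (δ : 𝒳 → ℝ → ℝ) : Prop :=
  RiskSafe P ℬ ℓ δ ∧
  ∀ φ : 𝒳 → ℝ → ℝ, IsBinaryTestFamily ℬ ℓ φ → ¬ StrictlyPreferable P Q ℬ ℓ m Γ φ δ

/-- Likelihood ratio `Λ = dQ/dP`. -/
noncomputable def LR (P Q : Measure 𝒳) (x : 𝒳) : ℝ := (Q.rnDeriv P x).toReal

/-- `P` and `Q` are continuous: the distribution of `Λ` under `P` is atomless. -/
def AtomlessLR (P Q : Measure 𝒳) : Prop := ∀ c : ℝ, P {x | LR P Q x = c} = 0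

open Set Filter
open scoped Topology

theorem exists_countable_subset_inter_Ioc_nonempty {α : Type*} [LinearOrder α] [TopologicalSpace α]
    [OrderTopology α] [SecondCountableTopology α] (A : Set α) :
    ∃ D ⊆ A, D.Countable ∧ ∀ a ∈ A, ∀ c < a, (D ∩ Ioc c a).Nonempty := by
  obtain ⟨D, hDA, hDc, hD⟩ :=
    (TopologicalSpace.IsSeparable.of_separableSpace A).exists_countable_dense_subset
  refine ⟨D ∪ {a ∈ A | 𝓝[A ∩ Iio a] a = ⊥}, union_subset hDA (sep_subset _ _),
    hDc.union countable_setOfPred_isolated_left_within, fun a ha c hc => ?_⟩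
  by_cases hisol : 𝓝[A ∩ Iio a] a = ⊥
  · exact ⟨a, Or.inr ⟨ha, hisol⟩, hc, le_rfl⟩
  · have : (𝓝[A ∩ Iio a] a).NeBot := ⟨hisol⟩
    have hleft : Ioi c ∩ (A ∩ Iio a) ∈ 𝓝[A ∩ Iio a] a :=
      Filter.inter_mem (mem_nhdsWithin_of_mem_nhds (Ioi_mem_nhds hc)) self_mem_nhdsWithin
    obtain ⟨y, hcy, hyA, hya⟩ := Filter.nonempty_of_mem hleft
    obtain ⟨z, ⟨hcz, hza⟩, hzD⟩ := mem_closure_iff.1 (hD hyA) (Ioo c a) isOpen_Ioo ⟨hcy, hya⟩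
    exact ⟨z, Or.inl hzD, hcz, hza.le⟩

theorem exists_measure_mem_Ioc_ne_zero {Ω α : Type*} [MeasurableSpace Ω] [LinearOrder α]
    [TopologicalSpace α] [OrderTopology α] [SecondCountableTopology α] {μ : Measure Ω}
    {A : Set α} {T : Set Ω} {f g : Ω → α} (hT : μ T ≠ 0)
    (h : ∀ x ∈ T, ∃ a ∈ A, a ∈ Ioc (f x) (g x)) :
    ∃ a ∈ A, μ {x ∈ T | a ∈ Ioc (f x) (g x)} ≠ 0 := by
  obtain ⟨D, hDA, hDc, hD⟩ := exists_countable_subset_inter_Ioc_nonempty A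
  have hcover : T ⊆ ⋃ d ∈ D, {x ∈ T | d ∈ Ioc (f x) (g x)} := fun x hx => by
    obtain ⟨a, ha, hfa, hag⟩ := h x hx
    obtain ⟨d, hd, hfd, hda⟩ := hD a ha (f x) hfa
    exact mem_biUnion hd ⟨hx, hfd, hda.trans hag⟩
  by_contra! hnull
  exact hT (measure_mono_null hcover
    ((measure_biUnion_null_iff hDc).2 fun d hd => hnull d (hDA hd)))

theorem exists_isOpen_measure_ne_zero_lt {X : Type*} [TopologicalSpace X]
    [SecondCountableTopology X] [MeasurableSpace X] (μ : Measure X) [μ.OuterRegular]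
    [NullSingletonClass μ] (hμ : μ ≠ 0) {ε : ℝ≥0∞} (hε : ε ≠ 0) :
    ∃ U, IsOpen U ∧ μ U ≠ 0 ∧ μ U < ε := by
  obtain ⟨c, -, hc⟩ := exists_mem_forall_mem_nhdsWithin_pos_measure
    (Measure.measure_univ_ne_zero.2 hμ)
  have hcε : μ {c} < ε := by
    rw [measure_singleton]
    exact pos_iff_ne_zero.2 hε
  obtain ⟨U, hcU, hU, hUε⟩ := Set.exists_isOpen_lt_of_lt {c} ε hcε
  exact ⟨U, hU, (hc U (mem_nhdsWithin_of_mem_nhds (hU.mem_nhds (hcU rfl)))).ne', hUε⟩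

theorem exists_measurableSet_subset_measure_ne_zero_lt {Ω X : Type*} [MeasurableSpace Ω]
    [TopologicalSpace X] [TopologicalSpace.PseudoMetrizableSpace X] [SecondCountableTopology X]
    [MeasurableSpace X] [BorelSpace X] [MeasurableSingletonClass X]
    {μ : Measure Ω} [IsFiniteMeasure μ] {f : Ω → X} (hf : Measurable f)
    (hfiber : ∀ c, μ {x | f x = c} = 0) {T : Set Ω} (hT : MeasurableSet T) (hT0 : μ T ≠ 0)
    {ε : ℝ≥0∞} (hε : ε ≠ 0) :
    ∃ S ⊆ T, MeasurableSet S ∧ μ S ≠ 0 ∧ μ S < ε := by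
  have hmap {U : Set X} (hU : MeasurableSet U) :
      (μ.restrict T).map f U = μ (f ⁻¹' U ∩ T) := by
    rw [Measure.map_apply hf hU, Measure.restrict_apply (hf hU)]
  have : NullSingletonClass ((μ.restrict T).map f) := ⟨fun c => by
    rw [hmap (measurableSet_singleton c)]
    exact measure_mono_null inter_subset_left (hfiber c)⟩
  have hne : (μ.restrict T).map f ≠ 0 := by
    rwa [Ne, Measure.map_eq_zero_iff hf.aemeasurable, Measure.restrict_eq_zero]
  obtain ⟨U, hU, hU0, hUε⟩ := exists_isOpen_measure_ne_zero_lt _ hne hε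
  rw [hmap hU.measurableSet] at hU0 hUε
  exact ⟨f ⁻¹' U ∩ T, inter_subset_right, (hf hU.measurableSet).inter hT, hU0, hUε⟩

section

variable {Ω : Type*} {ℬ : Set ℝ} {ℓ : ℝ → ℝ} {δ : Ω → ℝ → ℝ} {b : ℝ} {v : Ω → ℝ}

theorem le_Esup (hb : b ∈ ℬ) (x : Ω) : ENNReal.ofReal (ℓ b * δ x b) ≤ Esup ℬ ℓ δ x :=
  le_iSup (fun b : ℬ => ENNReal.ofReal (ℓ b * δ x b)) ⟨b, hb⟩

theorem lt_of_Esup_lt (hb : b ∈ ℬ) (hℓ : 0 ≤ ℓ b) {x : Ω} {t : ℝ}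
    (h : Esup ℬ ℓ δ x < ENNReal.ofReal (ℓ b * t)) : δ x b < t :=
  lt_of_mul_lt_mul_left (ENNReal.ofReal_lt_ofReal_iff'.1 ((le_Esup hb x).trans_lt h)).1 hℓ

/-- Raise `δ` at the single scenario `b` to the level `v`: the competitor that beats an inadmissible
`δ`. Because of the `max`, observations where `δ` already exceeds `v` are left alone. -/
noncomputable def raise (δ : Ω → ℝ → ℝ) (b : ℝ) (v : Ω → ℝ) (x : Ω) : ℝ → ℝ :=
  Function.update (δ x) b (max (δ x b) (v x))

theorem raise_self (x : Ω) : raise δ b v x b = max (δ x b) (v x) :=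
  Function.update_self ..

theorem raise_of_ne {b' : ℝ} (h : b' ≠ b) (x : Ω) : raise δ b v x b' = δ x b' :=
  Function.update_of_ne h ..

theorem le_raise (x : Ω) (b' : ℝ) : δ x b' ≤ raise δ b v x b' := by
  rcases eq_or_ne b' b with rfl | hne
  · exact (le_max_left _ _).trans_eq (raise_self x).symm
  · exact (raise_of_ne hne x).ge

theorem Esup_raise (hb : b ∈ ℬ) (hℓ : 0 ≤ ℓ b) (x : Ω) :
    Esup ℬ ℓ (raise δ b v) x = max (Esup ℬ ℓ δ x) (ENNReal.ofReal (ℓ b * v x)) := by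
  have hself : ENNReal.ofReal (ℓ b * raise δ b v x b) =
      max (ENNReal.ofReal (ℓ b * δ x b)) (ENNReal.ofReal (ℓ b * v x)) := by
    rw [raise_self, mul_max_of_nonneg _ _ hℓ, ENNReal.ofReal_max]
  apply le_antisymm
  · refine iSup_le fun ⟨b', hb'⟩ => ?_
    rcases eq_or_ne b' b with rfl | hne
    · exact hself.trans_le (max_le_max_right _ (le_Esup hb x))
    · rw [raise_of_ne hne]
      exact (le_Esup hb' x).trans (le_max_left _ _)
  · have hraised := hself.symm.trans_le (le_Esup (ℓ := ℓ) (δ := raise δ b v) hb x)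
    refine max_le (iSup_le fun ⟨b', hb'⟩ => ?_) ((le_max_right _ _).trans hraised)
    rcases eq_or_ne b' b with rfl | hne
    · exact (le_max_left _ _).trans hraised
    · rw [← raise_of_ne (δ := δ) (v := v) hne]
      exact le_Esup hb' x

end

section

variable {P Q : Measure 𝒳} {ℬ : Set ℝ} {ℓ m : ℝ → ℝ} {Γ : Set (𝒳 → ℝ)} {φ δ : 𝒳 → ℝ → ℝ}
  {b : ℝ} {v : 𝒳 → ℝ} {G : 𝒳 → ℝ≥0∞}

theorem IsTestFamily.exists_lt_ofReal_of_lt_Esup (hφ : IsTestFamily ℬ ℓ φ)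
    (hℓ : ∀ b ∈ ℬ, 0 ≤ ℓ b) {x : 𝒳} {a : ℝ≥0∞} (h : a < Esup ℬ ℓ φ x) :
    ∃ b ∈ ℬ, a < ENNReal.ofReal (ℓ b) := by
  obtain ⟨⟨b, hb⟩, hab⟩ := lt_iSup_iff.1 h
  exact ⟨b, hb, hab.trans_le (ENNReal.ofReal_le_ofReal
    (mul_le_of_le_one_right (hℓ b hb) (hφ.2.1 x b hb).2))⟩

theorem IsBinaryTestFamily.exists_ofReal_mem_Ioc_Esup (hφ : IsBinaryTestFamily ℬ ℓ φ)
    {x : 𝒳} {a : ℝ≥0∞} (h : a < Esup ℬ ℓ φ x) :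
    ∃ b ∈ ℬ, ENNReal.ofReal (ℓ b) ∈ Ioc a (Esup ℬ ℓ φ x) := by
  obtain ⟨⟨b, hb⟩, hab⟩ := lt_iSup_iff.1 h
  have hle := le_Esup (ℓ := ℓ) (δ := φ) hb x
  rcases hφ.2 x b hb with hzero | hone
  · simp [hzero] at hab
  · rw [hone, mul_one] at hab hle
    exact ⟨b, hb, hab, hle⟩

theorem measure_Esup_lt_one_ne_zero [IsProbabilityMeasure P] (hδ : Measurable (Esup ℬ ℓ δ))
    (h : typeIRisk P ℬ ℓ δ < 1) : P {x | Esup ℬ ℓ δ x < 1} ≠ 0 :=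
  ((measure_le_lintegral_pos hδ.aemeasurable).trans_le
    (measure_mono fun _ hx => lt_of_le_of_lt hx h)).ne'

theorem measurable_uncurry_raise (hδ : Measurable fun p : 𝒳 × ℝ => δ p.1 p.2)
    (hv : Measurable v) : Measurable fun p : 𝒳 × ℝ => raise δ b v p.1 p.2 := by
  simp only [raise, Function.update_apply]
  have hsec : Measurable fun x => δ x b := hδ.comp measurable_prodMk_right
  exact Measurable.ite (measurable_snd (measurableSet_singleton b))
    ((hsec.max hv).comp measurable_fst) hδ

theorem IsTestFamily.raise (hδ : IsTestFamily ℬ ℓ δ) (hb : b ∈ ℬ) (hℓ : 0 ≤ ℓ b)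
    (hv : Measurable v) (hv1 : ∀ x, v x ≤ 1) : IsTestFamily ℬ ℓ (raise δ b v) := by
  refine ⟨measurable_uncurry_raise hδ.1 hv, fun x b' hb' =>
    ⟨(hδ.2.1 x b' hb').1.trans (le_raise x b'), ?_⟩, ?_⟩
  · rcases eq_or_ne b' b with rfl | hne
    · rw [raise_self]
      exact max_le (hδ.2.1 x b' hb').2 (hv1 x)
    · rw [raise_of_ne hne]
      exact (hδ.2.1 x b' hb').2
  · simpa only [funext (Esup_raise hb hℓ)] using hδ.2.2.max (hv.const_mul _).ennreal_ofReal

theorem IsBinaryTestFamily.raise (hδ : IsBinaryTestFamily ℬ ℓ δ) (hb : b ∈ ℬ) (hℓ : 0 ≤ ℓ b)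
    (hv : Measurable v) (hv01 : ∀ x, v x = 0 ∨ v x = 1) :
    IsBinaryTestFamily ℬ ℓ (raise δ b v) := by
  refine ⟨hδ.1.raise hb hℓ hv fun x => ?_, fun x b' hb' => ?_⟩
  · rcases hv01 x with h | h <;> simp [h]
  · rcases eq_or_ne b' b with rfl | hne
    · rw [raise_self]
      rcases hδ.2 x b' hb' with h | h <;> rcases hv01 x with h' | h' <;> simp [h, h']
    · rw [raise_of_ne hne]
      exact hδ.2 x b' hb'

theorem riskSafe_raise (hb : b ∈ ℬ) (hℓ : 0 ≤ ℓ b) (hδG : ∀ᵐ x ∂P, Esup ℬ ℓ δ x ≤ G x)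
    (hvG : ∀ x, ENNReal.ofReal (ℓ b * v x) ≤ G x) (hG : ∫⁻ x, G x ∂P ≤ 1) :
    RiskSafe P ℬ ℓ (raise δ b v) :=
  (lintegral_mono_ae (hδG.mono fun x hx =>
    (Esup_raise hb hℓ x).trans_le (max_le hx (hvG x)))).trans hG

theorem typeIIRisk_raise_le (hm : 0 ≤ m b) (B : 𝒳 → ℝ) :
    typeIIRisk Q m (raise δ b v) B ≤ typeIIRisk Q m δ B := by
  refine lintegral_mono fun x => ?_
  rcases eq_or_ne (B x) b with heq | hne
  · simp only [heq]
    exact ENNReal.ofReal_le_ofReal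
      (mul_le_mul_of_nonneg_left (sub_le_sub_left (le_raise x b) 1) hm)
  · simp only [raise_of_ne hne, le_refl]

theorem typeIIRisk_const_lt [IsFiniteMeasure Q] (hm : 0 < m b) (hδ : Measurable fun x => δ x b)
    (hφ0 : ∀ x, 0 ≤ φ x b) (hφ1 : ∀ x, φ x b ≤ 1) (hle : ∀ x, δ x b ≤ φ x b)
    (hlt : Q {x | δ x b < φ x b} ≠ 0) :
    typeIIRisk Q m φ (fun _ => b) < typeIIRisk Q m δ (fun _ => b) := by
  have hfinite : typeIIRisk Q m φ (fun _ => b) ≠ ∞ := by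
    have hbound : typeIIRisk Q m φ (fun _ => b) ≤ ∫⁻ _, ENNReal.ofReal (m b) ∂Q :=
      lintegral_mono fun x => ENNReal.ofReal_le_ofReal
        (mul_le_of_le_one_right hm.le (sub_le_self 1 (hφ0 x)))
    exact ne_top_of_le_ne_top (lintegral_const_lt_top ENNReal.ofReal_ne_top).ne hbound
  refine lintegral_strict_mono_of_ae_le_of_ae_lt_on
    ((hδ.const_sub 1).const_mul _).ennreal_ofReal.aemeasurable hfinite
    (.of_forall fun x => ?_) hlt (.of_forall fun x (hx : δ x b < φ x b) => ?_)
  · exact ENNReal.ofReal_le_ofReal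
      (mul_le_mul_of_nonneg_left (sub_le_sub_left (hle x) 1) hm.le)
  · exact (ENNReal.ofReal_lt_ofReal_iff (mul_pos hm (sub_pos.2 (hx.trans_le (hφ1 x))))).2
      (mul_lt_mul_of_pos_left (sub_lt_sub_left hx 1) hm)

theorem strictlyPreferable_raise [IsFiniteMeasure Q] (hPQ : P ≪ Q) (hδ : IsTestFamily ℬ ℓ δ)
    (hb : b ∈ ℬ) (hℓ : 0 ≤ ℓ b) (hm : 0 < m b) (hΓ : (fun _ => b) ∈ Γ) (hv : Measurable v)
    (hv1 : ∀ x, v x ≤ 1) (hsafe : RiskSafe P ℬ ℓ (raise δ b v))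
    (hlt : P {x | δ x b < v x} ≠ 0) : StrictlyPreferable P Q ℬ ℓ m Γ (raise δ b v) δ := by
  have hraise01 x := (hδ.raise hb hℓ hv hv1).2.1 x b hb
  have hQlt : Q {x | δ x b < raise δ b v x b} ≠ 0 := by
    simpa only [raise_self, lt_max_iff, lt_irrefl, false_or] using mt (@hPQ _) hlt
  exact ⟨hsafe, fun B _ => typeIIRisk_raise_le hm.le B, _, hΓ,
    typeIIRisk_const_lt hm (hδ.1.comp measurable_prodMk_right) (fun x => (hraise01 x).1)
      (fun x => (hraise01 x).2) (fun x => le_raise x b) hQlt⟩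

theorem not_admissible_of_Esup_lt [IsFiniteMeasure Q] (hPQ : P ≪ Q) (hδ : IsTestFamily ℬ ℓ δ)
    (hb : b ∈ ℬ) (hℓ : 0 < ℓ b) (hm : 0 < m b) (hΓ : (fun _ => b) ∈ Γ) (hGm : Measurable G)
    (hδG : ∀ᵐ x ∂P, Esup ℬ ℓ δ x ≤ G x) (hG : ∫⁻ x, G x ∂P ≤ 1)
    (hlt : P {x | Esup ℬ ℓ δ x < G x ∧ Esup ℬ ℓ δ x < ENNReal.ofReal (ℓ b)} ≠ 0) :
    ¬ Admissible P Q ℬ ℓ m Γ δ := by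
  let v (x : 𝒳) : ℝ := (min (G x) (ENNReal.ofReal (ℓ b))).toReal / ℓ b
  have hv : Measurable v := (hGm.min measurable_const).ennreal_toReal.div_const _
  have hv1 (x : 𝒳) : v x ≤ 1 :=
    (div_le_one hℓ).2 (ENNReal.toReal_le_of_le_ofReal hℓ.le (min_le_right _ _))
  have hℓv (x : 𝒳) : ENNReal.ofReal (ℓ b * v x) = min (G x) (ENNReal.ofReal (ℓ b)) := by
    rw [mul_div_cancel₀ _ hℓ.ne',
      ENNReal.ofReal_toReal (ne_top_of_le_ne_top ENNReal.ofReal_ne_top (min_le_right _ _))]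
  have hδv : P {x | δ x b < v x} ≠ 0 := mt (measure_mono_null fun x hx =>
    lt_of_Esup_lt hb hℓ.le ((lt_min hx.1 hx.2).trans_eq (hℓv x).symm)) hlt
  have hsafe : RiskSafe P ℬ ℓ (raise δ b v) :=
    riskSafe_raise hb hℓ.le hδG (fun x => (hℓv x).trans_le (min_le_left _ _)) hG
  exact fun hadm => hadm.2 _ (hδ.raise hb hℓ.le hv hv1)
    (strictlyPreferable_raise hPQ hδ hb hℓ.le hm hΓ hv hv1 hsafe hδv)

theorem not_admissibleBinary_of_mem_Ioc_Esup [IsFiniteMeasure Q] (hPQ : P ≪ Q)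
    (hδ : IsBinaryTestFamily ℬ ℓ δ) (hb : b ∈ ℬ) (hℓ : 0 ≤ ℓ b) (hm : 0 < m b)
    (hΓ : (fun _ => b) ∈ Γ) (hGm : Measurable G) (hδG : ∀ᵐ x ∂P, Esup ℬ ℓ δ x ≤ G x)
    (hG : ∫⁻ x, G x ∂P ≤ 1)
    (hlt : P {x | ENNReal.ofReal (ℓ b) ∈ Ioc (Esup ℬ ℓ δ x) (G x)} ≠ 0) :
    ¬ AdmissibleBinary P Q ℬ ℓ m Γ δ := by
  let v (x : 𝒳) : ℝ := if ENNReal.ofReal (ℓ b) ≤ G x then 1 else 0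
  have hv : Measurable v :=
    Measurable.ite (measurableSet_le measurable_const hGm) measurable_const measurable_const
  have hv01 (x : 𝒳) : v x = 0 ∨ v x = 1 := (ite_eq_or_eq _ 1 0).symm
  have hv1 (x : 𝒳) : v x ≤ 1 := (hv01 x).elim (fun h => h ▸ zero_le_one) le_of_eq
  have hvG (x : 𝒳) : ENNReal.ofReal (ℓ b * v x) ≤ G x := by
    by_cases hx : ENNReal.ofReal (ℓ b) ≤ G x <;> simp [v, hx]
  have hδv : P {x | δ x b < v x} ≠ 0 := mt (measure_mono_null fun x hx =>
    lt_of_Esup_lt hb hℓ (by simpa only [v, if_pos hx.2, mul_one] using hx.1)) hlt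
  exact fun hadm => hadm.2 _ (hδ.raise hb hℓ hv hv01)
    (strictlyPreferable_raise hPQ hδ.1 hb hℓ hm hΓ hv hv1 (riskSafe_raise hb hℓ hδG hvG hG) hδv)

theorem not_admissible_of_Esup_le [IsFiniteMeasure Q] (hPQ : P ≪ Q) (hℓ : ∀ b ∈ ℬ, 0 < ℓ b)
    (hm : ∀ b ∈ ℬ, 0 < m b) (hΓ : ConstAdv 𝒳 ℬ ⊆ Γ) (hφ : IsTestFamily ℬ ℓ φ)
    (hδ : IsTestFamily ℬ ℓ δ) (hφsafe : RiskSafe P ℬ ℓ φ)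
    (hle : ∀ᵐ x ∂P, Esup ℬ ℓ δ x ≤ Esup ℬ ℓ φ x)
    (hlt : P {x | Esup ℬ ℓ δ x < Esup ℬ ℓ φ x} ≠ 0) : ¬ Admissible P Q ℬ ℓ m Γ δ := by
  obtain ⟨_, ⟨b, hb, rfl⟩, hb0⟩ :=
    exists_measure_mem_Ioc_ne_zero (A := (fun b => ENNReal.ofReal (ℓ b)) '' ℬ)
      (f := Esup ℬ ℓ δ) (g := fun _ => ∞) hlt fun x hx => by
        obtain ⟨b, hb, hxb⟩ := hφ.exists_lt_ofReal_of_lt_Esup (fun b hb => (hℓ b hb).le) hx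
        exact ⟨_, mem_image_of_mem _ hb, hxb, le_top⟩
  exact not_admissible_of_Esup_lt hPQ hδ hb (hℓ b hb) (hm b hb) (hΓ ⟨b, hb, rfl⟩) hφ.2.2 hle
    hφsafe (mt (measure_mono_null fun x hx => ⟨hx.1, hx.2.1⟩) hb0)

theorem not_admissibleBinary_of_Esup_le [IsFiniteMeasure Q] (hPQ : P ≪ Q)
    (hℓ : ∀ b ∈ ℬ, 0 ≤ ℓ b) (hm : ∀ b ∈ ℬ, 0 < m b) (hΓ : ConstAdv 𝒳 ℬ ⊆ Γ)
    (hφ : IsBinaryTestFamily ℬ ℓ φ) (hδ : IsBinaryTestFamily ℬ ℓ δ) (hφsafe : RiskSafe P ℬ ℓ φ)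
    (hle : ∀ᵐ x ∂P, Esup ℬ ℓ δ x ≤ Esup ℬ ℓ φ x)
    (hlt : P {x | Esup ℬ ℓ δ x < Esup ℬ ℓ φ x} ≠ 0) : ¬ AdmissibleBinary P Q ℬ ℓ m Γ δ := by
  obtain ⟨_, ⟨b, hb, rfl⟩, hb0⟩ :=
    exists_measure_mem_Ioc_ne_zero (A := (fun b => ENNReal.ofReal (ℓ b)) '' ℬ)
      (f := Esup ℬ ℓ δ) (g := Esup ℬ ℓ φ) hlt fun x hx => by
        obtain ⟨b, hb, hxb⟩ := hφ.exists_ofReal_mem_Ioc_Esup hx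
        exact ⟨_, mem_image_of_mem _ hb, hxb⟩
  exact not_admissibleBinary_of_mem_Ioc_Esup hPQ hδ hb (hℓ b hb) (hm b hb) (hΓ ⟨b, hb, rfl⟩)
    hφ.1.2.2 hle hφsafe (mt (measure_mono_null fun x hx => hx.2) hb0)

theorem not_admissible_of_typeIRisk_lt_one [IsProbabilityMeasure P] [IsFiniteMeasure Q]
    (hPQ : P ≪ Q) (hδ : IsTestFamily ℬ ℓ δ) (hb : b ∈ ℬ) (hℓ : 1 ≤ ℓ b) (hm : 0 < m b)
    (hΓ : (fun _ => b) ∈ Γ) (hrisk : typeIRisk P ℬ ℓ δ < 1) : ¬ Admissible P Q ℬ ℓ m Γ δ := by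
  have hslack : 1 - typeIRisk P ℬ ℓ δ ≠ 0 := (tsub_pos_of_lt hrisk).ne'
  have hbudget : ∫⁻ x, (Esup ℬ ℓ δ x + (1 - typeIRisk P ℬ ℓ δ)) ∂P ≤ 1 := by
    rw [lintegral_add_right _ measurable_const, lintegral_const, measure_univ, mul_one]
    exact (add_tsub_cancel_of_le hrisk.le).le
  refine not_admissible_of_Esup_lt hPQ hδ hb (one_pos.trans_le hℓ) hm hΓ (hδ.2.2.add_const _)
    (.of_forall fun _ => le_self_add) hbudget
    (mt (measure_mono_null fun x hx => ⟨?_, ?_⟩) (measure_Esup_lt_one_ne_zero hδ.2.2 hrisk))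
  · exact ENNReal.lt_add_right (LT.lt.ne_top hx) hslack
  · exact lt_of_lt_of_le hx (ENNReal.one_le_ofReal.2 hℓ)

theorem not_admissibleBinary_of_typeIRisk_lt_one [IsProbabilityMeasure P] [IsFiniteMeasure Q]
    (hPQ : P ≪ Q) {f : 𝒳 → ℝ} (hf : Measurable f) (hfiber : ∀ c, P {x | f x = c} = 0)
    (hδ : IsBinaryTestFamily ℬ ℓ δ) (hb : b ∈ ℬ) (hℓ : 1 ≤ ℓ b) (hm : 0 < m b)
    (hΓ : (fun _ => b) ∈ Γ) (hrisk : typeIRisk P ℬ ℓ δ < 1) :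
    ¬ AdmissibleBinary P Q ℬ ℓ m Γ δ := by
  have hEm : Measurable (Esup ℬ ℓ δ) := hδ.1.2.2
  have hslack : 1 - typeIRisk P ℬ ℓ δ ≠ 0 := (tsub_pos_of_lt hrisk).ne'
  obtain ⟨S, hSE, hS, hS0, hSlt⟩ := exists_measurableSet_subset_measure_ne_zero_lt hf hfiber
    (measurableSet_lt hEm measurable_const) (measure_Esup_lt_one_ne_zero hEm hrisk)
    (ENNReal.div_ne_zero.2 ⟨hslack, ENNReal.ofReal_ne_top (r := ℓ b)⟩)
  let G (x : 𝒳) : ℝ≥0∞ := Esup ℬ ℓ δ x + S.indicator (fun _ => ENNReal.ofReal (ℓ b)) x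
  have hG : ∫⁻ x, G x ∂P ≤ 1 := calc
    ∫⁻ x, G x ∂P = typeIRisk P ℬ ℓ δ + ENNReal.ofReal (ℓ b) * P S := by
      rw [lintegral_add_left hEm, lintegral_indicator_const hS, typeIRisk]
    _ ≤ typeIRisk P ℬ ℓ δ + (1 - typeIRisk P ℬ ℓ δ) := by
      gcongr
      exact (mul_comm _ _).trans_le (ENNReal.mul_le_of_le_div hSlt.le)
    _ = 1 := add_tsub_cancel_of_le hrisk.le
  refine not_admissibleBinary_of_mem_Ioc_Esup hPQ hδ hb (zero_le_one.trans hℓ) hm hΓ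
    (hEm.add (measurable_const.indicator hS)) (.of_forall fun _ => le_self_add) hG
    (mt (measure_mono_null fun x hx => ⟨?_, ?_⟩) hS0)
  · exact lt_of_lt_of_le (hSE hx) (ENNReal.one_le_ofReal.2 hℓ)
  · simp [hx]

end

theorem measurable_LR (P Q : Measure 𝒳) : Measurable (LR P Q) :=
  (Measure.measurable_rnDeriv Q P).ennreal_toReal

theorem stmt3_general
    (P Q : Measure 𝒳) [IsProbabilityMeasure P] [IsFiniteMeasure Q] (hPQ : P ≪ Q)
    (ℬ : Set ℝ) (ℓ : ℝ → ℝ) (hℓpos : ∀ b ∈ ℬ, 0 < ℓ b) (hℓone : ∃ b ∈ ℬ, 1 ≤ ℓ b)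
    (m : ℝ → ℝ) (hm : ∀ b ∈ ℬ, 0 < m b)
    (Γ : Set (𝒳 → ℝ)) (hΓ : ConstAdv 𝒳 ℬ ⊆ Γ)
    (φ δ : 𝒳 → ℝ → ℝ)
    (hφ : IsTestFamily ℬ ℓ φ) (hδ : IsTestFamily ℬ ℓ δ) (hφsafe : RiskSafe P ℬ ℓ φ) :
    ((∀ᵐ x ∂P, Esup ℬ ℓ δ x ≤ Esup ℬ ℓ φ x) →
      0 < P {x | Esup ℬ ℓ δ x < Esup ℬ ℓ φ x} →
      ¬ Admissible P Q ℬ ℓ m Γ δ) ∧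
    (typeIRisk P ℬ ℓ δ < 1 → ¬ Admissible P Q ℬ ℓ m Γ δ) ∧
    (IsBinaryTestFamily ℬ ℓ φ → IsBinaryTestFamily ℬ ℓ δ →
      (∀ᵐ x ∂P, Esup ℬ ℓ δ x ≤ Esup ℬ ℓ φ x) →
      0 < P {x | Esup ℬ ℓ δ x < Esup ℬ ℓ φ x} →
      ¬ AdmissibleBinary P Q ℬ ℓ m Γ δ) ∧
    (∀ f : 𝒳 → ℝ, Measurable f → (∀ c, P {x | f x = c} = 0) →
      IsBinaryTestFamily ℬ ℓ δ → typeIRisk P ℬ ℓ δ < 1 →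
      ¬ AdmissibleBinary P Q ℬ ℓ m Γ δ) := by
  obtain ⟨b, hb, hℓb⟩ := hℓone
  have hbΓ : (fun _ => b) ∈ Γ := hΓ ⟨b, hb, rfl⟩
  refine ⟨fun hle hlt => ?_, fun hrisk => ?_, fun hφb hδb hle hlt => ?_,
    fun f hf hfiber hδb hrisk => ?_⟩
  · exact not_admissible_of_Esup_le hPQ hℓpos hm hΓ hφ hδ hφsafe hle hlt.ne'
  · exact not_admissible_of_typeIRisk_lt_one hPQ hδ hb hℓb (hm b hb) hbΓ hrisk
  · exact not_admissibleBinary_of_Esup_le hPQ (fun b hb => (hℓpos b hb).le) hm hΓ hφb hδb hφsafe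
      hle hlt.ne'
  · exact not_admissibleBinary_of_typeIRisk_lt_one hPQ hf hfiber hδb hb hℓb (hm b hb) hbΓ hrisk

/-- if the e-value of the risk-safe family `φ` `P`-a.s. dominates (and with
positive probability strictly exceeds) that of the risk-safe family `δ`, then `δ` is
`Γ`-inadmissible; consequently non-sharp families are inadmissible.  The same statements
hold for binary families when the likelihood ratio is atomless under `P`. -/
theorem stmt3
    [StandardBorelSpace 𝒳]
    (P Q : Measure 𝒳) [IsProbabilityMeasure P] [IsProbabilityMeasure Q]
    (hPQ : P ≪ Q) (hQP : Q ≪ P)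
    (ℬ : Set ℝ) (hℬne : ℬ.Nonempty)
    (ℓ : ℝ → ℝ) (hℓmeas : Measurable ℓ) (hℓpos : ∀ b ∈ ℬ, 0 < ℓ b)
    (hℓmono : ∀ b₁ ∈ ℬ, ∀ b₂ ∈ ℬ, b₁ ≤ b₂ → ℓ b₁ ≤ ℓ b₂)
    (hℓgt1 : ∃ b ∈ ℬ, 1 < ℓ b)
    (m : ℝ → ℝ) (hm : ∀ b ∈ ℬ, 0 < m b)
    (Γ : Set (𝒳 → ℝ)) (hΓ : ConstAdv 𝒳 ℬ ⊆ Γ)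
    (φ δ : 𝒳 → ℝ → ℝ)
    (hφ : IsTestFamily ℬ ℓ φ) (hδ : IsTestFamily ℬ ℓ δ)
    (hφsafe : RiskSafe P ℬ ℓ φ) (hδsafe : RiskSafe P ℬ ℓ δ) :
    ((∀ᵐ x ∂P, Esup ℬ ℓ δ x ≤ Esup ℬ ℓ φ x) →
      0 < P {x | Esup ℬ ℓ δ x < Esup ℬ ℓ φ x} →
      ¬ Admissible P Q ℬ ℓ m Γ δ) ∧
    (typeIRisk P ℬ ℓ δ < 1 → ¬ Admissible P Q ℬ ℓ m Γ δ) ∧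
    (AtomlessLR P Q → IsBinaryTestFamily ℬ ℓ φ → IsBinaryTestFamily ℬ ℓ δ →
      (∀ᵐ x ∂P, Esup ℬ ℓ δ x ≤ Esup ℬ ℓ φ x) →
      0 < P {x | Esup ℬ ℓ δ x < Esup ℬ ℓ φ x} →
      ¬ AdmissibleBinary P Q ℬ ℓ m Γ δ) ∧
    (AtomlessLR P Q → IsBinaryTestFamily ℬ ℓ δ → typeIRisk P ℬ ℓ δ < 1 →
      ¬ AdmissibleBinary P Q ℬ ℓ m Γ δ) := by
  obtain ⟨dom, sharp, domBin, sharpBin⟩ := stmt3_general P Q hPQ ℬ ℓ hℓpos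
    (hℓgt1.imp fun _ h => ⟨h.1, h.2.le⟩) m hm Γ hΓ φ δ hφ hδ hφsafe
  exact ⟨dom, sharp, fun _ => domBin, sharpBin (LR P Q) (measurable_LR P Q)⟩

end PostHocTesting
end

section
/- Let Γ be any set of adversaries containing all constant maps. If the test family δ is Γ-admissible, then for every b ∈ ℬ, δ(x,b) = min{1, E_δ(x)/ℓ(b)} for P-almost every x, where E_δ(x) = sup_{b∈ℬ} ℓ(b)δ(x,b). -/
open MeasureTheory
open scoped ENNReal

namespace PostHocTesting

variable {𝒳 : Type*} [MeasurableSpace 𝒳]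

/-!
Fix a scenario `b`. Raising `δ(x,b)` to `min{1, E_δ(x)/ℓ(b)}`, the largest rejection probability
`t` with `ℓ(b) t ≤ E_δ(x)`, leaves every other scenario and the supremum `E_δ` unchanged. Hence it
costs no type-I risk, and it weakly decreases the type-II risk against every adversary. If it
changed `δ(·,b)` on a set of positive `Q`-measure, it would strictly decrease the (finite) type-II
risk against the constant adversary `b`, contradicting admissibility.
-/

/-- The largest rejection probability whose type-I loss at level `l` is covered by the
e-value `e`, that is `min{1, e/l}`. It is real-valued, like the tests themselves; the minimum with
`1` is taken in `ℝ≥0∞`, so that `e = ∞` gives `1`. -/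
noncomputable def maxRejectionProb (l : ℝ) (e : ℝ≥0∞) : ℝ :=
  (min 1 (e / ENNReal.ofReal l)).toReal

theorem ofReal_maxRejectionProb (l : ℝ) (e : ℝ≥0∞) :
    ENNReal.ofReal (maxRejectionProb l e) = min 1 (e / ENNReal.ofReal l) :=
  ENNReal.ofReal_toReal (ne_top_of_le_ne_top ENNReal.one_ne_top (min_le_left _ _))

theorem maxRejectionProb_nonneg (l : ℝ) (e : ℝ≥0∞) : 0 ≤ maxRejectionProb l e :=
  ENNReal.toReal_nonneg

theorem maxRejectionProb_le_one (l : ℝ) (e : ℝ≥0∞) : maxRejectionProb l e ≤ 1 :=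
  ENNReal.toReal_le_of_le_ofReal zero_le_one (by simp)

theorem le_maxRejectionProb_iff {l t : ℝ} {e : ℝ≥0∞} (hl : 0 < l) (ht : t ≤ 1) :
    t ≤ maxRejectionProb l e ↔ ENNReal.ofReal (l * t) ≤ e := by
  have hl₀ : ENNReal.ofReal l ≠ 0 := (ENNReal.ofReal_pos.2 hl).ne'
  calc t ≤ maxRejectionProb l e
      ↔ ENNReal.ofReal t ≤ min 1 (e / ENNReal.ofReal l) := by
        rw [← ofReal_maxRejectionProb,
          ENNReal.ofReal_le_ofReal_iff (maxRejectionProb_nonneg l e)]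
    _ ↔ ENNReal.ofReal t ≤ e / ENNReal.ofReal l := by
        simp only [le_min_iff, ENNReal.ofReal_le_one, ht, true_and]
    _ ↔ ENNReal.ofReal (l * t) ≤ e := by
        rw [ENNReal.le_div_iff_mul_le (Or.inl hl₀) (Or.inl ENNReal.ofReal_ne_top), mul_comm,
          ENNReal.ofReal_mul hl.le]

theorem measurable_maxRejectionProb (l : ℝ) : Measurable (maxRejectionProb l) :=
  (measurable_const.min (measurable_id.div_const _)).ennreal_toReal

section Esup

variable {α : Type*} {ℬ : Set ℝ} {ℓ : ℝ → ℝ} {δ : α → ℝ → ℝ} {b : ℝ}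

theorem ofReal_mul_le_Esup (hb : b ∈ ℬ) (x : α) : ENNReal.ofReal (ℓ b * δ x b) ≤ Esup ℬ ℓ δ x :=
  le_iSup (fun b : ℬ => ENNReal.ofReal (ℓ b * δ x b)) ⟨b, hb⟩

theorem Esup_update_eq {g : α → ℝ} (hℓ : 0 ≤ ℓ b) (hδg : ∀ x, δ x b ≤ g x)
    (hgE : ∀ x, ENNReal.ofReal (ℓ b * g x) ≤ Esup ℬ ℓ δ x) :
    Esup ℬ ℓ (fun x => Function.update (δ x) b (g x)) = Esup ℬ ℓ δ := by
  funext x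
  refine le_antisymm (iSup_le fun c => ?_) (iSup_mono fun c => ENNReal.ofReal_le_ofReal ?_)
  · obtain hc | hc := eq_or_ne (c : ℝ) b
    · simpa only [hc, Function.update_self] using hgE x
    · simpa only [Function.update_of_ne hc] using ofReal_mul_le_Esup c.2 x
  · obtain hc | hc := eq_or_ne (c : ℝ) b
    · simpa only [hc, Function.update_self] using mul_le_mul_of_nonneg_left (hδg x) hℓ
    · simp only [Function.update_of_ne hc, le_refl]

end Esup

section TestFamily

variable {ℬ : Set ℝ} {ℓ m : ℝ → ℝ} {δ φ : 𝒳 → ℝ → ℝ} {b : ℝ} {g : 𝒳 → ℝ}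

theorem IsTestFamily.measurable_apply (hδ : IsTestFamily ℬ ℓ δ) (b : ℝ) :
    Measurable fun x => δ x b :=
  hδ.1.comp measurable_prodMk_right

theorem IsTestFamily.update (hδ : IsTestFamily ℬ ℓ δ) (hg : Measurable g)
    (hg01 : ∀ x, g x ∈ Set.Icc (0 : ℝ) 1)
    (hE : Measurable (Esup ℬ ℓ fun x => Function.update (δ x) b (g x))) :
    IsTestFamily ℬ ℓ fun x => Function.update (δ x) b (g x) := by
  refine ⟨?_, fun x c hc => ?_, hE⟩
  · simp only [Function.update_apply]
    exact Measurable.ite (measurable_snd (measurableSet_singleton b))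
      (hg.comp measurable_fst) hδ.1
  · obtain rfl | hcb := eq_or_ne c b
    · simpa only [Function.update_self] using hg01 x
    · simpa only [Function.update_of_ne hcb] using hδ.2.1 x c hc

theorem typeIIRisk_update_le (Q : Measure 𝒳) (hm : 0 ≤ m b) (hδg : ∀ x, δ x b ≤ g x)
    (B : 𝒳 → ℝ) :
    typeIIRisk Q m (fun x => Function.update (δ x) b (g x)) B ≤ typeIIRisk Q m δ B := by
  refine lintegral_mono fun x => ENNReal.ofReal_le_ofReal ?_
  obtain hB | hB := eq_or_ne (B x) b
  · simpa only [hB, Function.update_self] using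
      mul_le_mul_of_nonneg_left (sub_le_sub_left (hδg x) 1) hm
  · simp only [Function.update_of_ne hB, le_refl]

theorem typeIIRisk_const_ne_top (Q : Measure 𝒳) [IsFiniteMeasure Q] (hm : 0 ≤ m b)
    (hδ : ∀ x, 0 ≤ δ x b) : typeIIRisk Q m δ (fun _ => b) ≠ ∞ := by
  have bound : typeIIRisk Q m δ (fun _ => b) ≤ ∫⁻ _, ENNReal.ofReal (m b) ∂Q :=
    lintegral_mono fun x => ENNReal.ofReal_le_ofReal <|
      mul_le_of_le_one_right hm (sub_le_self 1 (hδ x))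
  refine ne_top_of_le_ne_top ?_ bound
  rw [lintegral_const]
  exact ENNReal.mul_ne_top ENNReal.ofReal_ne_top (measure_ne_top Q _)

theorem ae_eq_of_typeIIRisk_const_le {Q : Measure 𝒳} (hm : 0 < m b)
    (hδ : Measurable fun x => δ x b) (hδφ : ∀ x, δ x b ≤ φ x b) (hφ : ∀ x, φ x b ≤ 1)
    (hfin : typeIIRisk Q m φ (fun _ => b) ≠ ∞)
    (hrisk : typeIIRisk Q m δ (fun _ => b) ≤ typeIIRisk Q m φ (fun _ => b)) :
    ∀ᵐ x ∂Q, δ x b = φ x b := by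
  have loss_le (x : 𝒳) : m b * (1 - φ x b) ≤ m b * (1 - δ x b) :=
    mul_le_mul_of_nonneg_left (sub_le_sub_left (hδφ x) 1) hm.le
  have loss_nonneg (x : 𝒳) : 0 ≤ m b * (1 - φ x b) :=
    mul_nonneg hm.le (sub_nonneg.2 (hφ x))
  have loss_ae_eq := ae_eq_of_ae_le_of_lintegral_le
    (.of_forall fun x => ENNReal.ofReal_le_ofReal (loss_le x)) hfin
    ((hδ.const_sub 1).const_mul (m b)).ennreal_ofReal.aemeasurable hrisk
  filter_upwards [loss_ae_eq] with x hx
  rw [ENNReal.ofReal_eq_ofReal_iff (loss_nonneg x) ((loss_nonneg x).trans (loss_le x))] at hx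
  exact (sub_right_inj.1 (mul_left_cancel₀ hm.ne' hx)).symm

theorem Admissible.ae_eq_of_le_of_ofReal_mul_le_Esup {P Q : Measure 𝒳} [IsFiniteMeasure Q]
    {Γ : Set (𝒳 → ℝ)} (hadm : Admissible P Q ℬ ℓ m Γ δ) (hδ : IsTestFamily ℬ ℓ δ)
    (hb : b ∈ ℬ) (hℓ : 0 ≤ ℓ b) (hm : 0 < m b) (hΓ : (fun _ => b) ∈ Γ)
    (hg : Measurable g) (hδg : ∀ x, δ x b ≤ g x) (hg1 : ∀ x, g x ≤ 1)
    (hgE : ∀ x, ENNReal.ofReal (ℓ b * g x) ≤ Esup ℬ ℓ δ x) :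
    ∀ᵐ x ∂Q, δ x b = g x := by
  set φ : 𝒳 → ℝ → ℝ := fun x => Function.update (δ x) b (g x)
  have φ_b (x : 𝒳) : φ x b = g x := Function.update_self ..
  have g_nonneg (x : 𝒳) : 0 ≤ g x := (hδ.2.1 x b hb).1.trans (hδg x)
  have Esup_φ : Esup ℬ ℓ φ = Esup ℬ ℓ δ := Esup_update_eq hℓ hδg hgE
  have φ_test : IsTestFamily ℬ ℓ φ :=
    hδ.update hg (fun x => ⟨g_nonneg x, hg1 x⟩) (Esup_φ ▸ hδ.2.2)
  have φ_safe : RiskSafe P ℬ ℓ φ := by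
    simpa only [RiskSafe, typeIRisk, Esup_φ] using hadm.1
  have risk_le : typeIIRisk Q m δ (fun _ => b) ≤ typeIIRisk Q m φ (fun _ => b) := by
    by_contra! hlt
    exact hadm.2 φ φ_test
      ⟨φ_safe, fun B _ => typeIIRisk_update_le Q hm.le hδg B, _, hΓ, hlt⟩
  have δ_eq_φ := ae_eq_of_typeIIRisk_const_le hm (hδ.measurable_apply b)
    (by simpa only [φ_b] using hδg) (by simpa only [φ_b] using hg1)
    (typeIIRisk_const_ne_top Q hm.le (by simpa only [φ_b] using g_nonneg)) risk_le
  simpa only [φ_b] using δ_eq_φ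

end TestFamily

theorem stmt4_general {P Q : Measure 𝒳} [IsFiniteMeasure Q] {ℬ : Set ℝ} {ℓ m : ℝ → ℝ}
    {Γ : Set (𝒳 → ℝ)} {δ : 𝒳 → ℝ → ℝ} (hδ : IsTestFamily ℬ ℓ δ)
    (hadm : Admissible P Q ℬ ℓ m Γ δ) {b : ℝ} (hb : b ∈ ℬ) (hℓ : 0 < ℓ b) (hm : 0 < m b)
    (hΓ : (fun _ => b) ∈ Γ) :
    ∀ᵐ x ∂Q, ENNReal.ofReal (δ x b) = min 1 (Esup ℬ ℓ δ x / ENNReal.ofReal (ℓ b)) := by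
  have δ_le (x : 𝒳) : δ x b ≤ maxRejectionProb (ℓ b) (Esup ℬ ℓ δ x) :=
    (le_maxRejectionProb_iff hℓ (hδ.2.1 x b hb).2).2 (ofReal_mul_le_Esup hb x)
  have loss_le (x : 𝒳) :
      ENNReal.ofReal (ℓ b * maxRejectionProb (ℓ b) (Esup ℬ ℓ δ x)) ≤ Esup ℬ ℓ δ x :=
    (le_maxRejectionProb_iff hℓ (maxRejectionProb_le_one _ _)).1 le_rfl
  have δ_eq := hadm.ae_eq_of_le_of_ofReal_mul_le_Esup hδ hb hℓ.le hm hΓ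
    ((measurable_maxRejectionProb (ℓ b)).comp hδ.2.2) δ_le
    (fun _ => maxRejectionProb_le_one _ _) loss_le
  filter_upwards [δ_eq] with x hx
  rw [hx, Function.comp_apply, ofReal_maxRejectionProb]

/-- canonical representation: any `Γ`-admissible randomized test family
satisfies `δ(x,b) = min{1, E_δ(x)/ℓ(b)}` for `P`-a.e. `x`, for each `b ∈ ℬ`. -/
theorem stmt4
    [StandardBorelSpace 𝒳]
    (P Q : Measure 𝒳) [IsProbabilityMeasure P] [IsProbabilityMeasure Q]
    (hPQ : P ≪ Q) (hQP : Q ≪ P)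
    (ℬ : Set ℝ) (hℬne : ℬ.Nonempty)
    (ℓ : ℝ → ℝ) (hℓmeas : Measurable ℓ) (hℓpos : ∀ b ∈ ℬ, 0 < ℓ b)
    (hℓmono : ∀ b₁ ∈ ℬ, ∀ b₂ ∈ ℬ, b₁ ≤ b₂ → ℓ b₁ ≤ ℓ b₂)
    (hℓgt1 : ∃ b ∈ ℬ, 1 < ℓ b)
    (m : ℝ → ℝ) (hm : ∀ b ∈ ℬ, 0 < m b)
    (Γ : Set (𝒳 → ℝ)) (hΓ : ConstAdv 𝒳 ℬ ⊆ Γ)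
    (δ : 𝒳 → ℝ → ℝ) (hδ : IsTestFamily ℬ ℓ δ)
    (hadm : Admissible P Q ℬ ℓ m Γ δ) :
    ∀ b ∈ ℬ, ∀ᵐ x ∂P,
      ENNReal.ofReal (δ x b) = min 1 (Esup ℬ ℓ δ x / ENNReal.ofReal (ℓ b)) :=
  fun b hb => hPQ.ae_le <| stmt4_general hδ hadm hb (hℓpos b hb) (hm b hb) (hΓ ⟨b, hb, rfl⟩)

end PostHocTesting
end
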